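/- For n = 1 and for n = 2, the action of the Hecke group H(λ₄) on Q*(√-n) has exactly 2 orbits; that is, the quotient of Q*(√-n) by the orbit equivalence relation has exactly two elements. -/

import Mathlib

open Complex

/-- The set `Q*(√-n)` of complex numbers `(a + √n·i)/c` with `a, c ∈ ℤ`,
`c` even and nonzero, and `c ∣ a² + n`. -/
def Qstar (n : ℕ) : Set ℂ :=
  {z | ∃ a c : ℤ, c ≠ 0 ∧ 2 ∣ c ∧ c ∣ (a ^ 2 + (n : ℤ)) ∧
    z = ((a : ℂ) + Real.sqrt n * Complex.I) / (c : ℂ)}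

/-- The Hecke transformation `x(z) = -1/(2z)`. -/
noncomputable def heckeX (z : ℂ) : ℂ := -1 / (2 * z)

/-- The Hecke transformation `y(z) = -1/(2(z+1))`. -/
noncomputable def heckeY (z : ℂ) : ℂ := -1 / (2 * (z + 1))

/-- One step of the Hecke group action. -/
noncomputable def heckeStep (z w : ℂ) : Prop := w = heckeX z ∨ w = heckeY z

/-- Two elements lie in the same orbit if they are related by the equivalence
relation on `Q*(√-n)` generated by `z ~ x(z)` and `z ~ y(z)`. -/
def sameOrbit (n : ℕ) (z w : ℂ) : Prop :=
  Relation.EqvGen (fun u v => u ∈ Qstar n ∧ v ∈ Qstar n ∧ heckeStep u v) z w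

/-- The quadruplet `Q_α = {α, y(α), y²(α), y³(α)}`. -/
noncomputable def quad (α : ℂ) : Set ℂ :=
  {α, heckeY α, heckeY (heckeY α), heckeY (heckeY (heckeY α))}

/-- The orbit relation on the subtype `Q*(√-n)`. -/
def orbitRel (n : ℕ) (u v : {z : ℂ // z ∈ Qstar n}) : Prop :=
  sameOrbit n u.1 v.1

/-- `E_i(n)`: the number of positive even integers `C` dividing `i² + n`
with `2(i²+n)/C + C ≤ 3i`. -/
def Efun (i n : ℕ) : ℕ :=
  ((i ^ 2 + n).divisors.filter (fun C => 2 ∣ C ∧ 2 * (i ^ 2 + n) / C + C ≤ 3 * i)).card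

/-!
An element `(a + √n i)/c` with `a² + n = c b` satisfies `x((a + √n i)/c) = (-a + √n i)/(2b)`, and
`y(z) = x(z + 1)`, so orbits are stable under integer translations. Translating to get
`2|a| ≤ |c|` and then applying `x` whenever `|2b| < |c|` is a descent on `|c|`, as in Gauss
reduction of binary quadratic forms; it stops at `c² ≤ 2|c b| = 2(a² + n) ≤ c²/2 + 2n`, that is
`c² ≤ 4n`. For `n < 4` only `c = ±2` remains, where `a` is determined modulo `c` by the parity of
`n`. The two remaining points lie in opposite half-planes, which `x` and `y` preserve.
-/

/-- The complex number `(a + √n i)/c`, the general shape of an element of `Q*(√-n)`. -/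
noncomputable def qstarPoint (n : ℕ) (a c : ℤ) : ℂ :=
  ((a : ℂ) + Real.sqrt n * Complex.I) / (c : ℂ)

/-- The arithmetic conditions on `a` and `c` under which `(a + √n i)/c` belongs to `Q*(√-n)`. -/
structure IsQstarPair (n : ℕ) (a c : ℤ) : Prop where
  ne_zero : c ≠ 0
  two_dvd : 2 ∣ c
  dvd : c ∣ a ^ 2 + (n : ℤ)

section

variable {n : ℕ} {a b c : ℤ} {z w : ℂ}

theorem mem_Qstar_iff : z ∈ Qstar n ↔ ∃ a c : ℤ, IsQstarPair n a c ∧ z = qstarPoint n a c :=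
  ⟨fun ⟨a, c, hc, h2, hdvd, hz⟩ => ⟨a, c, ⟨hc, h2, hdvd⟩, hz⟩,
    fun ⟨a, c, ⟨hc, h2, hdvd⟩, hz⟩ => ⟨a, c, hc, h2, hdvd, hz⟩⟩

theorem IsQstarPair.mem (h : IsQstarPair n a c) : qstarPoint n a c ∈ Qstar n :=
  mem_Qstar_iff.2 ⟨a, c, h, rfl⟩

theorem mul_pos_of_sq_add_eq (hn : 0 < n) (hb : a ^ 2 + (n : ℤ) = c * b) : 0 < c * b := by
  rw [← hb]
  positivity

theorem IsQstarPair.add_mul (h : IsQstarPair n a c) (k : ℤ) : IsQstarPair n (a + k * c) c := by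
  obtain ⟨b, hb⟩ := h.dvd
  exact ⟨h.ne_zero, h.two_dvd, b + 2 * k * a + k ^ 2 * c, by linear_combination hb⟩

theorem IsQstarPair.neg_two_mul (hn : 0 < n) (h : IsQstarPair n a c)
    (hb : a ^ 2 + (n : ℤ) = c * b) : IsQstarPair n (-a) (2 * b) := by
  obtain ⟨d, hd⟩ := h.two_dvd
  have hb0 : b ≠ 0 := right_ne_zero_of_mul (mul_pos_of_sq_add_eq hn hb).ne'
  exact ⟨mul_ne_zero two_ne_zero hb0, ⟨b, rfl⟩, d, by linear_combination hb + b * hd⟩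

theorem isQstarPair_self_two (n : ℕ) : IsQstarPair n n 2 :=
  ⟨two_ne_zero, dvd_rfl, by
    simpa only [sq, mul_add, mul_one] using (Int.even_mul_succ_self n).two_dvd⟩

theorem isQstarPair_self_neg_two (n : ℕ) : IsQstarPair n n (-2) :=
  ⟨by decide, by decide, neg_dvd.2 (isQstarPair_self_two n).dvd⟩

theorem IsQstarPair.two_dvd_sub (h : IsQstarPair n a c) : 2 ∣ (n : ℤ) - a := by
  have heven : Even (a ^ 2 + (n : ℤ)) := even_iff_two_dvd.2 (h.two_dvd.trans h.dvd)
  rw [Int.even_add, Int.even_pow' two_ne_zero] at heven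
  exact (Int.even_sub.2 heven.symm).two_dvd

theorem qstarPoint_add_mul (hc : c ≠ 0) (k : ℤ) :
    qstarPoint n (a + k * c) c = qstarPoint n a c + k := by
  have hc' : (c : ℂ) ≠ 0 := Int.cast_ne_zero.2 hc
  unfold qstarPoint
  push_cast
  field_simp
  ring

theorem heckeX_qstarPoint (hn : 0 < n) (hb : a ^ 2 + (n : ℤ) = c * b) :
    heckeX (qstarPoint n a c) = qstarPoint n (-a) (2 * b) := by
  have hcb : (c : ℂ) * b ≠ 0 := mod_cast (mul_pos_of_sq_add_eq hn hb).ne'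
  have hb0 : (b : ℂ) ≠ 0 := right_ne_zero_of_mul hcb
  have hsqrt : (Real.sqrt n : ℂ) ^ 2 = n := mod_cast Real.sq_sqrt n.cast_nonneg
  have hprod : ((a : ℂ) + Real.sqrt n * I) * (-a + Real.sqrt n * I) = -(c * b) := by
    have hb' : (a : ℂ) ^ 2 + n = c * b := mod_cast hb
    linear_combination (Real.sqrt n : ℂ) ^ 2 * I_sq - hsqrt - hb'
  have hnum : (a : ℂ) + Real.sqrt n * I ≠ 0 :=
    left_ne_zero_of_mul (hprod ▸ neg_ne_zero.2 hcb)
  unfold heckeX qstarPoint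
  push_cast
  field_simp
  linear_combination -hprod

theorem heckeY_eq_heckeX_add_one (z : ℂ) : heckeY z = heckeX (z + 1) :=
  rfl

theorem heckeX_mem_Qstar (hn : 0 < n) (hz : z ∈ Qstar n) : heckeX z ∈ Qstar n := by
  obtain ⟨a, c, h, rfl⟩ := mem_Qstar_iff.1 hz
  obtain ⟨b, hb⟩ := h.dvd
  exact heckeX_qstarPoint hn hb ▸ (h.neg_two_mul hn hb).mem

theorem add_intCast_mem_Qstar (hz : z ∈ Qstar n) (k : ℤ) : z + k ∈ Qstar n := by
  obtain ⟨a, c, h, rfl⟩ := mem_Qstar_iff.1 hz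
  exact qstarPoint_add_mul h.ne_zero k ▸ (h.add_mul k).mem

theorem sameOrbit_equivalence (n : ℕ) : Equivalence (sameOrbit n) :=
  Relation.EqvGen.is_equivalence _

theorem sameOrbit.symm (h : sameOrbit n z w) : sameOrbit n w z :=
  (sameOrbit_equivalence n).symm h

theorem sameOrbit.trans {v : ℂ} (h₁ : sameOrbit n z w) (h₂ : sameOrbit n w v) :
    sameOrbit n z v :=
  (sameOrbit_equivalence n).trans h₁ h₂

theorem orbitRel_equivalence (n : ℕ) : Equivalence (orbitRel n) :=
  (sameOrbit_equivalence n).comap Subtype.val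

theorem sameOrbit_heckeX (hn : 0 < n) (hz : z ∈ Qstar n) : sameOrbit n z (heckeX z) :=
  .rel _ _ ⟨hz, heckeX_mem_Qstar hn hz, .inl rfl⟩

theorem sameOrbit_add_one (hn : 0 < n) (hz : z ∈ Qstar n) : sameOrbit n z (z + 1) := by
  have hz1 : z + 1 ∈ Qstar n := mod_cast add_intCast_mem_Qstar hz 1
  have hy : sameOrbit n z (heckeX (z + 1)) :=
    .rel _ _ ⟨hz, heckeX_mem_Qstar hn hz1, .inr (heckeY_eq_heckeX_add_one z).symm⟩
  exact hy.trans (sameOrbit_heckeX hn hz1).symm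

theorem sameOrbit_add_intCast (hn : 0 < n) (hz : z ∈ Qstar n) (k : ℤ) :
    sameOrbit n z (z + k) := by
  induction k with
  | zero => simpa only [Int.cast_zero, add_zero] using (sameOrbit_equivalence n).refl z
  | succ k ih =>
    have hstep := sameOrbit_add_one hn (add_intCast_mem_Qstar hz k)
    rw [show z + ((k : ℤ) : ℂ) + 1 = z + ((k + 1 : ℤ) : ℂ) by push_cast; ring] at hstep
    exact ih.trans hstep
  | pred k ih =>
    have hstep := sameOrbit_add_one hn (add_intCast_mem_Qstar hz (-k - 1))
    rw [show z + ((-k - 1 : ℤ) : ℂ) + 1 = z + ((-k : ℤ) : ℂ) by push_cast; ring] at hstep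
    exact ih.trans hstep.symm

theorem IsQstarPair.sameOrbit_add_mul (hn : 0 < n) (h : IsQstarPair n a c) (k : ℤ) :
    sameOrbit n (qstarPoint n a c) (qstarPoint n (a + k * c) c) :=
  qstarPoint_add_mul h.ne_zero k ▸ sameOrbit_add_intCast hn h.mem k

theorem exists_two_mul_abs_add_mul_le (a : ℤ) (hc : c ≠ 0) :
    ∃ k : ℤ, 2 * |a + k * c| ≤ |c| := by
  have hpos : 0 < c.natAbs := Int.natAbs_pos.2 hc
  have hle := Int.le_bmod (x := a) hpos
  have hlt := Int.bmod_lt (x := a) hpos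
  obtain ⟨k, hk⟩ : c ∣ a.bmod c.natAbs - a := Int.natAbs_dvd.1 Int.dvd_bmod_sub_self
  refine ⟨k, ?_⟩
  rw [show a + k * c = a.bmod c.natAbs by linear_combination -hk, Int.abs_eq_natAbs c]
  have habs : |a.bmod c.natAbs| ≤ (c.natAbs : ℤ) / 2 := abs_le.2 ⟨hle, by omega⟩
  omega

theorem sq_le_four_mul_of_reduced (hb : a ^ 2 + (n : ℤ) = c * b)
    (ha : 2 * |a| ≤ |c|) (hcb : |c| ≤ |2 * b|) : c ^ 2 ≤ 4 * n := by
  have hprod : c ^ 2 ≤ 2 * (a ^ 2 + n) :=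
    calc c ^ 2 = |c| * |c| := by rw [abs_mul_abs_self, sq]
      _ ≤ |c| * |2 * b| := by gcongr
      _ = 2 * (a ^ 2 + n) := by
        rw [← abs_mul, mul_left_comm, ← hb, abs_of_nonneg (by positivity)]
  have hsq : 4 * a ^ 2 ≤ c ^ 2 := by
    have := sq_le_sq.2 (show |2 * a| ≤ |c| by rwa [abs_mul, abs_two])
    linarith [mul_pow 2 a 2]
  linarith

theorem IsQstarPair.exists_sameOrbit_sq_le (hn : 0 < n) (h : IsQstarPair n a c) :
    ∃ a' c' : ℤ, IsQstarPair n a' c' ∧ c' ^ 2 ≤ 4 * (n : ℤ) ∧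
      sameOrbit n (qstarPoint n a c) (qstarPoint n a' c') := by
  induction hm : c.natAbs using Nat.strong_induction_on generalizing a c with
  | _ m ih =>
    obtain ⟨k, hk⟩ := exists_two_mul_abs_add_mul_le a h.ne_zero
    have hshift := h.sameOrbit_add_mul hn k
    have h' := h.add_mul k
    obtain ⟨b, hb⟩ := h'.dvd
    rcases le_or_gt |c| |2 * b| with hle | hlt
    · exact ⟨_, c, h', sq_le_four_mul_of_reduced hb hk hle, hshift⟩
    · have hinv := sameOrbit_heckeX hn h'.mem
      rw [heckeX_qstarPoint hn hb] at hinv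
      have hdescent : (2 * b).natAbs < m := by
        rwa [Int.abs_eq_natAbs, Int.abs_eq_natAbs, Nat.cast_lt, hm] at hlt
      obtain ⟨a', c', hred, hsq, horb⟩ := ih _ hdescent (h'.neg_two_mul hn hb) rfl
      exact ⟨a', c', hred, hsq, hshift.trans (hinv.trans horb)⟩

theorem IsQstarPair.sameOrbit_self_of_dvd_two (hn : 0 < n) (h : IsQstarPair n a c)
    (hc : c ∣ 2) : sameOrbit n (qstarPoint n a c) (qstarPoint n n c) := by
  obtain ⟨k, hk⟩ := hc.trans h.two_dvd_sub
  rw [show (n : ℤ) = a + k * c by linear_combination hk]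
  exact h.sameOrbit_add_mul hn k

theorem sameOrbit_two_or_neg_two (hn : 0 < n) (hn4 : n < 4) (hz : z ∈ Qstar n) :
    sameOrbit n z (qstarPoint n n 2) ∨ sameOrbit n z (qstarPoint n n (-2)) := by
  obtain ⟨a₀, c₀, h₀, rfl⟩ := mem_Qstar_iff.1 hz
  obtain ⟨a, c, h, hsq, horb⟩ := h₀.exists_sameOrbit_sq_le hn
  obtain ⟨hlo, hhi⟩ : -4 < c ∧ c < 4 := abs_lt.1 (abs_lt_of_sq_lt_sq (by omega) (by norm_num))
  have hc : c = 2 ∨ c = -2 := by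
    have := h.ne_zero
    have := h.two_dvd
    omega
  rcases hc with rfl | rfl
  · exact .inl (horb.trans (h.sameOrbit_self_of_dvd_two hn dvd_rfl))
  · exact .inr (horb.trans (h.sameOrbit_self_of_dvd_two hn (by decide)))

theorem im_heckeX (z : ℂ) : (heckeX z).im = z.im / (2 * normSq z) := by
  have hinv : heckeX z = ((-1 / 2 : ℝ) : ℂ) * z⁻¹ := by
    unfold heckeX
    push_cast
    ring
  rw [hinv, im_ofReal_mul, inv_im]
  ring

theorem im_heckeX_pos_iff : 0 < (heckeX z).im ↔ 0 < z.im := by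
  rcases eq_or_ne z 0 with rfl | hz
  · simp [heckeX]
  · have := normSq_pos.2 hz
    rw [im_heckeX, div_pos_iff_of_pos_right (by positivity)]

theorem im_heckeY_pos_iff : 0 < (heckeY z).im ↔ 0 < z.im := by
  rw [heckeY_eq_heckeX_add_one, im_heckeX_pos_iff, add_im, one_im, add_zero]

theorem sameOrbit.im_pos_iff (h : sameOrbit n z w) : 0 < z.im ↔ 0 < w.im := by
  induction h with
  | rel u v h =>
    rcases h.2.2 with rfl | rfl
    · exact im_heckeX_pos_iff.symm
    · exact im_heckeY_pos_iff.symm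
  | refl => rfl
  | symm _ _ _ ih => exact ih.symm
  | trans _ _ _ _ _ ih₁ ih₂ => exact ih₁.trans ih₂

theorem im_qstarPoint_pos_iff (hn : 0 < n) : 0 < (qstarPoint n a c).im ↔ 0 < c := by
  have hsqrt : 0 < Real.sqrt n := Real.sqrt_pos.2 (Nat.cast_pos.2 hn)
  have him : (qstarPoint n a c).im = Real.sqrt n / c := by
    rw [qstarPoint, ← ofReal_intCast c, div_ofReal_im]
    simp
  rw [him, div_pos_iff_of_pos_left hsqrt, Int.cast_pos]

theorem stmt15_general (hn : 0 < n) (hn4 : n < 4) : Nat.card (Quot (orbitRel n)) = 2 := by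
  let upper : {z : ℂ // z ∈ Qstar n} := ⟨_, (isQstarPair_self_two n).mem⟩
  let lower : {z : ℂ // z ∈ Qstar n} := ⟨_, (isQstarPair_self_neg_two n).mem⟩
  have mk_eq_iff := (orbitRel_equivalence n).quot_mk_eq_iff
  refine Nat.card_eq_two_iff.2 ⟨Quot.mk _ upper, Quot.mk _ lower, fun heq => ?_, ?_⟩
  · have him := ((mk_eq_iff _ _).1 heq).im_pos_iff
    rw [im_qstarPoint_pos_iff hn, im_qstarPoint_pos_iff hn] at him
    omega
  · refine Set.eq_univ_iff_forall.2 (Quot.ind fun u => ?_)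
    exact (sameOrbit_two_or_neg_two hn hn4 u.2).imp (mk_eq_iff u upper).2 (mk_eq_iff u lower).2

end

theorem stmt15 :
    Nat.card (Quot (orbitRel 1)) = 2 ∧ Nat.card (Quot (orbitRel 2)) = 2 :=
  ⟨stmt15_general (by decide) (by decide), stmt15_general (by decide) (by decide)⟩
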